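/- (CMC surfaces containing a line segment: converse.) Let J ⊆ ℝ be an open interval, x₀ ∈ J, H ≠ 0 real, and let f : Σ → su(2) be a smooth conformal immersion of constant mean curvature H on an open set Σ ⊆ ℂ containing J × {0}, such that f(x,0) = 2x·e₁ for all x ∈ J and ∂_y f(x₀,0) is a positive multiple of e₂. Then the conformal factor satisfies u(x,0) = 0 for all x ∈ J, and there exists a real analytic function θ₀ : J → ℝ with θ₀(x₀) = 0 such that ∂_y f(x,0) = 2(cos θ₀(x)·e₂ + sin θ₀(x)·e₃) for all x ∈ J, and the Hopf differential coefficient of f satisfies Q(x,0) = -i θ₀′(x) - 2H for all x ∈ J. -/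

import Mathlib

open Matrix Complex

noncomputable section

attribute [local instance] Matrix.linftyOpNormedAddCommGroup Matrix.linftyOpNormedSpace
  Matrix.linftyOpNormedRing Matrix.linftyOpNormedAlgebra

/-- The space of 2×2 complex matrices. -/
abbrev M2 : Type := Matrix (Fin 2) (Fin 2) ℂ

/-- Basis vector `e₁` of su(2). -/
def e1 : M2 := !![0, -Complex.I; -Complex.I, 0]

/-- Basis vector `e₂` of su(2). -/
def e2 : M2 := !![0, 1; -1, 0]

/-- Basis vector `e₃` of su(2). -/
def e3 : M2 := !![Complex.I, 0; 0, -Complex.I]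

/-- The inner product `⟨X,Y⟩ = -(1/2) tr (XY)` identifying su(2) with E³. -/
def ip (X Y : M2) : ℂ := -(1/2 : ℂ) * (X * Y).trace

/-- Partial derivative in the `x`-direction. -/
def px (f : ℂ → M2) (z : ℂ) : M2 := fderiv ℝ f z 1

/-- Partial derivative in the `y`-direction. -/
def py (f : ℂ → M2) (z : ℂ) : M2 := fderiv ℝ f z Complex.I

/-- Wirtinger derivative `∂_z = (1/2)(∂_x - i ∂_y)`. -/
def dz (f : ℂ → M2) (z : ℂ) : M2 := (2:ℂ)⁻¹ • (px f z - Complex.I • py f z)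

/-- Wirtinger derivative `∂_z̄ = (1/2)(∂_x + i ∂_y)`. -/
def dzb (f : ℂ → M2) (z : ℂ) : M2 := (2:ℂ)⁻¹ • (px f z + Complex.I • py f z)

/-- `x`-derivative of a real-valued function on ℂ. -/
def pxR (u : ℂ → ℝ) (z : ℂ) : ℝ := fderiv ℝ u z 1

/-- `y`-derivative of a real-valued function on ℂ. -/
def pyR (u : ℂ → ℝ) (z : ℂ) : ℝ := fderiv ℝ u z Complex.I

/-- Wirtinger derivative `u_z` of a real-valued function. -/
def dzR (u : ℂ → ℝ) (z : ℂ) : ℂ := (2:ℂ)⁻¹ * ((pxR u z : ℂ) - Complex.I * (pyR u z : ℂ))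

/-- Wirtinger derivative `u_z̄` of a real-valued function. -/
def dzbR (u : ℂ → ℝ) (z : ℂ) : ℂ := (2:ℂ)⁻¹ * ((pxR u z : ℂ) + Complex.I * (pyR u z : ℂ))

/-- `x`-derivative of a complex-valued function on ℂ. -/
def pxC (q : ℂ → ℂ) (z : ℂ) : ℂ := fderiv ℝ q z 1

/-- `y`-derivative of a complex-valued function on ℂ. -/
def pyC (q : ℂ → ℂ) (z : ℂ) : ℂ := fderiv ℝ q z Complex.I

/-- Wirtinger derivative `∂_z` of a complex-valued function. -/
def dzC (q : ℂ → ℂ) (z : ℂ) : ℂ := (2:ℂ)⁻¹ * (pxC q z - Complex.I * pyC q z)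

/-- Wirtinger derivative `∂_z̄` of a complex-valued function. -/
def dzbC (q : ℂ → ℂ) (z : ℂ) : ℂ := (2:ℂ)⁻¹ * (pxC q z + Complex.I * pyC q z)

/-!
Differentiating the inner products of `f_z`, `f_z̄` and the normal `N` and expanding in this basis
gives the Codazzi equation `Q_z̄ = 0`: the Hopf differential of a CMC surface is holomorphic. Along
the line, `f_x = 2 e₁` forces `u = 0` and `f_y = 2 c` for a curve `c` in the unit circle of the
plane orthogonal to `e₁`, and then `N = e₁ c = i c`. With `f_xx = 0` the mean curvature equation is
`⟨N, f_yy⟩ = 8 H`, so `Q = -i ω - 2 H` with `ω` the angular velocity of `c`. Thus the angle of `c`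
is a primitive of `-Im Q`, which inherits real analyticity from the holomorphic function `Q`.
-/

/-! ### The inner product on su(2) -/

lemma ip_comm (X Y : M2) : ip X Y = ip Y X := by
  rw [ip, ip, trace_mul_comm]

lemma ip_add_left (X Y Z : M2) : ip (X + Y) Z = ip X Z + ip Y Z := by
  simp only [ip, add_mul, trace_add, mul_add]

lemma ip_smul_left (c : ℂ) (X Y : M2) : ip (c • X) Y = c * ip X Y := by
  simp only [ip, smul_mul_assoc, trace_smul, smul_eq_mul, mul_left_comm]

lemma ip_add_right (X Y Z : M2) : ip X (Y + Z) = ip X Y + ip X Z := by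
  simp only [ip_comm X, ip_add_left]

lemma ip_smul_right (c : ℂ) (X Y : M2) : ip X (c • Y) = c * ip X Y := by
  simp only [ip_comm X, ip_smul_left]

lemma ip_sub_left (X Y Z : M2) : ip (X - Y) Z = ip X Z - ip Y Z := by
  simp only [ip, sub_mul, trace_sub, mul_sub]

lemma ip_sub_right (X Y Z : M2) : ip X (Y - Z) = ip X Y - ip X Z := by
  simp only [ip_comm X, ip_sub_left]

lemma ip_zero_right (X : M2) : ip X 0 = 0 := by
  simp only [ip, mul_zero, trace_zero]

lemma ip_one_right (X : M2) : ip X 1 = -(1 / 2) * X.trace := by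
  rw [ip, mul_one]

/-- `ip` as a continuous `ℝ`-bilinear map. -/
def ipL : M2 →L[ℝ] M2 →L[ℝ] ℂ :=
  (LinearMap.mk₂ ℝ ip ip_add_left (fun c X Y => ip_smul_left c X Y) ip_add_right
    (fun c X Y => ip_smul_right c X Y)).toContinuousBilinearMap

lemma ip_e1_e1 : ip e1 e1 = 1 := by
  norm_num [ip, e1, trace_fin_two]

lemma ip_e2_e2 : ip e2 e2 = 1 := by
  norm_num [ip, e2, trace_fin_two]

lemma ip_e3_e3 : ip e3 e3 = 1 := by
  norm_num [ip, e3, trace_fin_two]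

lemma ip_e1_e2 : ip e1 e2 = 0 := by
  simp [ip, e1, e2, trace_fin_two]

lemma ip_e3_e1 : ip e3 e1 = 0 := by
  simp [ip, e1, e3, trace_fin_two]

lemma ip_e3_e2 : ip e3 e2 = 0 := by
  simp [ip, e2, e3, trace_fin_two]

lemma e1_mul_e2 : e1 * e2 = e3 := by
  simp [e1, e2, e3]

lemma e1_mul_e3 : e1 * e3 = -e2 := by
  simp [e1, e2, e3]

lemma conjTranspose_e2 : e2ᴴ = -e2 := by
  ext i j; fin_cases i <;> fin_cases j <;> simp [e2]

lemma conjTranspose_e3 : e3ᴴ = -e3 := by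
  ext i j; fin_cases i <;> fin_cases j <;> simp [e3]

lemma sum_ip_smul_basis (X : M2) :
    ip X e1 • e1 + ip X e2 • e2 + ip X e3 • e3 - ip X 1 • (1 : M2) = X := by
  ext i j
  fin_cases i <;> fin_cases j <;>
    simp [ip, e1, e2, e3, trace_fin_two, mul_apply, Fin.sum_univ_two] <;>
    grind [I_mul_I]

lemma ip_eq_sum_basis (X Y : M2) :
    ip X Y = ip X e1 * ip Y e1 + ip X e2 * ip Y e2 + ip X e3 * ip Y e3 - ip X 1 * ip Y 1 := by
  conv_lhs => rw [ip_comm, ← sum_ip_smul_basis X]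
  simp only [ip_add_right, ip_sub_right, ip_smul_right]

lemma conj_ip_of_skew {X Y : M2} (hX : Xᴴ = -X) (hY : Yᴴ = -Y) :
    starRingEnd ℂ (ip X Y) = ip X Y := by
  have htrace : starRingEnd ℂ (X * Y).trace = (X * Y).trace := by
    rw [starRingEnd_apply, ← trace_conjTranspose, conjTranspose_mul, hX, hY, neg_mul_neg,
      trace_mul_comm]
  simp only [ip, map_mul, htrace, map_neg, map_div₀, map_one, map_ofNat]

lemma ofReal_re_ip_of_skew {X Y : M2} (hX : Xᴴ = -X) (hY : Yᴴ = -Y) :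
    ((ip X Y).re : ℂ) = ip X Y :=
  conj_eq_iff_re.mp (conj_ip_of_skew hX hY)

lemma ip_conj_conj {A B : M2} (h : B * A = 1) (X Y : M2) :
    ip (A * X * B) (A * Y * B) = ip X Y := by
  have hmul : A * X * B * (A * Y * B) = A * (X * Y * B) := by
    simp only [mul_assoc, ← mul_assoc B A, h, one_mul]
  rw [ip, ip, hmul, trace_mul_comm, mul_assoc, h, mul_one]

lemma ip_conj_right (A B X Y : M2) : ip X (A * Y * B) = ip (B * X * A) Y := by
  rw [ip, ip, ← mul_assoc, trace_mul_comm]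
  simp only [mul_assoc]

/-! ### Wirtinger derivatives -/

lemma fderiv_fderiv_apply_comm {E V : Type*} [NormedAddCommGroup E] [NormedSpace ℝ E]
    [NormedAddCommGroup V] [NormedSpace ℝ V] {g : E → V} {z : E} (hg : ContDiffAt ℝ 2 g z)
    (v w : E) :
    fderiv ℝ (fun y => fderiv ℝ g y v) z w = fderiv ℝ (fun y => fderiv ℝ g y w) z v := by
  have hd : DifferentiableAt ℝ (fderiv ℝ g) z :=
    (hg.fderiv_right (m := 1) (by norm_num)).differentiableAt (by norm_num)
  have happly (v w : E) :
      fderiv ℝ (fun y => fderiv ℝ g y v) z w = fderiv ℝ (fderiv ℝ g) z w v := by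
    simp [fderiv_clm_apply hd (differentiableAt_const v)]
  rw [happly, happly, hg.isSymmSndFDerivAt (by simp)]

section Wirtinger

variable {f g h : ℂ → M2} {z : ℂ} {m n : WithTop ℕ∞}

lemma contDiffAt_px (hf : ContDiffAt ℝ n f z) (hmn : m + 1 ≤ n) : ContDiffAt ℝ m (px f) z :=
  (hf.fderiv_right hmn).clm_apply contDiffAt_const

lemma contDiffAt_py (hf : ContDiffAt ℝ n f z) (hmn : m + 1 ≤ n) : ContDiffAt ℝ m (py f) z :=
  (hf.fderiv_right hmn).clm_apply contDiffAt_const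

lemma contDiffAt_dz (hf : ContDiffAt ℝ n f z) (hmn : m + 1 ≤ n) : ContDiffAt ℝ m (dz f) z :=
  ((contDiffAt_px hf hmn).sub ((contDiffAt_py hf hmn).const_smul I)).const_smul (2 : ℂ)⁻¹

lemma contDiffAt_dzb (hf : ContDiffAt ℝ n f z) (hmn : m + 1 ≤ n) : ContDiffAt ℝ m (dzb f) z :=
  ((contDiffAt_px hf hmn).add ((contDiffAt_py hf hmn).const_smul I)).const_smul (2 : ℂ)⁻¹

lemma py_px_eq_px_py (hf : ContDiffAt ℝ 2 f z) : py (px f) z = px (py f) z :=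
  fderiv_fderiv_apply_comm hf 1 I

lemma fderiv_dz_apply (hf : ContDiffAt ℝ 2 f z) (v : ℂ) :
    fderiv ℝ (dz f) z v = (2 : ℂ)⁻¹ • (fderiv ℝ (px f) z v - I • fderiv ℝ (py f) z v) := by
  have hx := ((contDiffAt_px hf le_rfl).differentiableAt one_ne_zero).hasFDerivAt
  have hy := ((contDiffAt_py hf le_rfl).differentiableAt one_ne_zero).hasFDerivAt
  have hdz : HasFDerivAt (dz f) _ z := (hx.sub (hy.const_smul I)).const_smul (2 : ℂ)⁻¹
  rw [hdz.fderiv]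
  rfl

lemma fderiv_dzb_apply (hf : ContDiffAt ℝ 2 f z) (v : ℂ) :
    fderiv ℝ (dzb f) z v = (2 : ℂ)⁻¹ • (fderiv ℝ (px f) z v + I • fderiv ℝ (py f) z v) := by
  have hx := ((contDiffAt_px hf le_rfl).differentiableAt one_ne_zero).hasFDerivAt
  have hy := ((contDiffAt_py hf le_rfl).differentiableAt one_ne_zero).hasFDerivAt
  have hdzb : HasFDerivAt (dzb f) _ z := (hx.add (hy.const_smul I)).const_smul (2 : ℂ)⁻¹
  rw [hdzb.fderiv]
  rfl

lemma px_dz (hf : ContDiffAt ℝ 2 f z) :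
    px (dz f) z = (2 : ℂ)⁻¹ • (px (px f) z - I • px (py f) z) :=
  fderiv_dz_apply hf 1

lemma py_dz (hf : ContDiffAt ℝ 2 f z) :
    py (dz f) z = (2 : ℂ)⁻¹ • (px (py f) z - I • py (py f) z) := by
  rw [← py_px_eq_px_py hf]
  exact fderiv_dz_apply hf I

lemma px_dzb (hf : ContDiffAt ℝ 2 f z) :
    px (dzb f) z = (2 : ℂ)⁻¹ • (px (px f) z + I • px (py f) z) :=
  fderiv_dzb_apply hf 1

lemma py_dzb (hf : ContDiffAt ℝ 2 f z) :
    py (dzb f) z = (2 : ℂ)⁻¹ • (px (py f) z + I • py (py f) z) := by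
  rw [← py_px_eq_px_py hf]
  exact fderiv_dzb_apply hf I

lemma dz_dz (hf : ContDiffAt ℝ 2 f z) :
    dz (dz f) z = (4 : ℂ)⁻¹ • (px (px f) z - py (py f) z - (2 * I) • px (py f) z) := by
  rw [dz, px_dz hf, py_dz hf]
  match_scalars <;> grind [I_mul_I]

lemma dzb_dz (hf : ContDiffAt ℝ 2 f z) :
    dzb (dz f) z = (4 : ℂ)⁻¹ • (px (px f) z + py (py f) z) := by
  rw [dzb, px_dz hf, py_dz hf]
  match_scalars <;> grind [I_mul_I]

lemma dz_dzb (hf : ContDiffAt ℝ 2 f z) : dz (dzb f) z = dzb (dz f) z := by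
  rw [dzb_dz hf, dz, px_dzb hf, py_dzb hf]
  match_scalars <;> grind [I_mul_I]

lemma differentiableAt_ip (hg : DifferentiableAt ℝ g z) (hh : DifferentiableAt ℝ h z) :
    DifferentiableAt ℝ (fun w => ip (g w) (h w)) z :=
  (ipL.hasFDerivAt_of_bilinear hg.hasFDerivAt hh.hasFDerivAt).differentiableAt

lemma fderiv_ip_apply (hg : DifferentiableAt ℝ g z) (hh : DifferentiableAt ℝ h z) (v : ℂ) :
    fderiv ℝ (fun w => ip (g w) (h w)) z v
      = ip (fderiv ℝ g z v) (h z) + ip (g z) (fderiv ℝ h z v) := by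
  have hip : HasFDerivAt (fun w => ip (g w) (h w)) _ z :=
    ipL.hasFDerivAt_of_bilinear hg.hasFDerivAt hh.hasFDerivAt
  rw [hip.fderiv, add_comm]
  rfl

lemma dzC_ip (hg : DifferentiableAt ℝ g z) (hh : DifferentiableAt ℝ h z) :
    dzC (fun w => ip (g w) (h w)) z = ip (dz g z) (h z) + ip (g z) (dz h z) := by
  simp only [dzC, pxC, pyC, dz, px, py, fderiv_ip_apply hg hh, ip_smul_left, ip_smul_right,
    ip_sub_left, ip_sub_right]
  ring

lemma dzbC_ip (hg : DifferentiableAt ℝ g z) (hh : DifferentiableAt ℝ h z) :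
    dzbC (fun w => ip (g w) (h w)) z = ip (dzb g z) (h z) + ip (g z) (dzb h z) := by
  simp only [dzbC, pxC, pyC, dzb, px, py, fderiv_ip_apply hg hh, ip_smul_left, ip_smul_right,
    ip_add_left, ip_add_right]
  ring

lemma dzC_congr {q r : ℂ → ℂ} (hqr : q =ᶠ[nhds z] r) : dzC q z = dzC r z := by
  simp only [dzC, pxC, pyC, hqr.fderiv_eq]

lemma dzC_const_mul {q : ℂ → ℂ} (hq : DifferentiableAt ℝ q z) (c : ℂ) :
    dzC (fun w => c * q w) z = c * dzC q z := by
  simp only [dzC, pxC, pyC, fderiv_const_mul hq, _root_.smul_apply, smul_eq_mul]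
  ring

lemma ip_dz_add_ip_dz_eq_zero {c : ℂ} (hg : DifferentiableAt ℝ g z) (hh : DifferentiableAt ℝ h z)
    (hgh : ∀ᶠ w in nhds z, ip (g w) (h w) = c) :
    ip (dz g z) (h z) + ip (g z) (dz h z) = 0 := by
  have hconst : fderiv ℝ (fun w => ip (g w) (h w)) z = 0 := by
    rw [Filter.EventuallyEq.fderiv_eq hgh, fderiv_fun_const, Pi.zero_apply]
  simp [← dzC_ip hg hh, dzC, pxC, pyC, hconst]

lemma ip_dz_self_eq_zero {c : ℂ} (hg : DifferentiableAt ℝ g z)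
    (hgg : ∀ᶠ w in nhds z, ip (g w) (g w) = c) : ip (dz g z) (g z) = 0 := by
  have hleib := ip_dz_add_ip_dz_eq_zero hg hg hgg
  rw [ip_comm (g z)] at hleib
  exact self_eq_neg.mp (eq_neg_of_add_eq_zero_left hleib)

lemma ip_dzb_add_ip_dzb_eq_zero {c : ℂ} (hg : DifferentiableAt ℝ g z)
    (hh : DifferentiableAt ℝ h z) (hgh : ∀ᶠ w in nhds z, ip (g w) (h w) = c) :
    ip (dzb g z) (h z) + ip (g z) (dzb h z) = 0 := by
  have hconst : fderiv ℝ (fun w => ip (g w) (h w)) z = 0 := by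
    rw [Filter.EventuallyEq.fderiv_eq hgh, fderiv_fun_const, Pi.zero_apply]
  simp [← dzbC_ip hg hh, dzbC, pxC, pyC, hconst]

lemma ip_dzb_self_eq_zero {c : ℂ} (hg : DifferentiableAt ℝ g z)
    (hgg : ∀ᶠ w in nhds z, ip (g w) (g w) = c) : ip (dzb g z) (g z) = 0 := by
  have hleib := ip_dzb_add_ip_dzb_eq_zero hg hg hgg
  rw [ip_comm (g z)] at hleib
  exact self_eq_neg.mp (eq_neg_of_add_eq_zero_left hleib)

lemma differentiableAt_complex_of_dzbC_eq_zero {q : ℂ → ℂ} (hq : DifferentiableAt ℝ q z)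
    (hzb : dzbC q z = 0) : DifferentiableAt ℂ q z := by
  rw [differentiableAt_complex_iff_differentiableAt_real]
  refine ⟨hq, ?_⟩
  rw [dzbC, pxC, pyC] at hzb
  rw [smul_eq_mul]
  linear_combination -2 * I * hzb + fderiv ℝ q z I * I_mul_I

end Wirtinger

/-! ### Conformal immersions with an adapted frame -/

/-- `F z` is a unitary frame at `z` rotating `e1, e2` to the unit tangent vectors of `f` along
`∂_x` and `∂_y`, where `f` is conformal at `z` with factor `exp u`. -/
structure IsAdaptedFrame (f : ℂ → M2) (u : ℂ → ℝ) (F : ℂ → M2) (z : ℂ) : Prop where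
  conjTranspose_mul_self : (F z)ᴴ * F z = 1
  conj_e1 : F z * e1 * (F z)⁻¹ = (((2 * Real.exp (u z))⁻¹ : ℝ) : ℂ) • px f z
  conj_e2 : F z * e2 * (F z)⁻¹ = (((2 * Real.exp (u z))⁻¹ : ℝ) : ℂ) • py f z

/-- The unit normal determined by a frame `F` of the surface, `N = F e₃ F⁻¹`. -/
def unitNormal (F : ℂ → M2) (z : ℂ) : M2 := F z * e3 * (F z)⁻¹

/-- The Hopf differential coefficient `Q = ⟨N, f_zz⟩`. -/
def hopfCoeff (f F : ℂ → M2) (z : ℂ) : ℂ := ip (unitNormal F z) (dz (dz f) z)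

namespace IsAdaptedFrame

variable {f F : ℂ → M2} {u : ℂ → ℝ} {z : ℂ}

lemma inv_eq_conjTranspose (hF : IsAdaptedFrame f u F z) : (F z)⁻¹ = (F z)ᴴ :=
  inv_eq_left_inv hF.conjTranspose_mul_self

lemma inv_mul_self (hF : IsAdaptedFrame f u F z) : (F z)⁻¹ * F z = 1 := by
  rw [hF.inv_eq_conjTranspose, hF.conjTranspose_mul_self]

lemma px_eq (hF : IsAdaptedFrame f u F z) :
    px f z = ((2 * Real.exp (u z) : ℝ) : ℂ) • (F z * e1 * (F z)⁻¹) := by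
  rw [hF.conj_e1, smul_smul, ← ofReal_mul, mul_inv_cancel₀ (by positivity), ofReal_one, one_smul]

lemma py_eq (hF : IsAdaptedFrame f u F z) :
    py f z = ((2 * Real.exp (u z) : ℝ) : ℂ) • (F z * e2 * (F z)⁻¹) := by
  rw [hF.conj_e2, smul_smul, ← ofReal_mul, mul_inv_cancel₀ (by positivity), ofReal_one, one_smul]

lemma ip_px_px (hF : IsAdaptedFrame f u F z) :
    ip (px f z) (px f z) = ((2 * Real.exp (u z) : ℝ) : ℂ) ^ 2 := by
  rw [hF.px_eq, ip_smul_left, ip_smul_right, ip_conj_conj hF.inv_mul_self, ip_e1_e1]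
  ring

lemma ip_py_py (hF : IsAdaptedFrame f u F z) :
    ip (py f z) (py f z) = ((2 * Real.exp (u z) : ℝ) : ℂ) ^ 2 := by
  rw [hF.py_eq, ip_smul_left, ip_smul_right, ip_conj_conj hF.inv_mul_self, ip_e2_e2]
  ring

lemma ip_px_py (hF : IsAdaptedFrame f u F z) : ip (px f z) (py f z) = 0 := by
  rw [hF.px_eq, hF.py_eq, ip_smul_left, ip_smul_right, ip_conj_conj hF.inv_mul_self, ip_e1_e2]
  ring

lemma ip_unitNormal_px (hF : IsAdaptedFrame f u F z) : ip (unitNormal F z) (px f z) = 0 := by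
  rw [hF.px_eq, ip_smul_right, unitNormal, ip_conj_conj hF.inv_mul_self, ip_e3_e1, mul_zero]

lemma ip_unitNormal_py (hF : IsAdaptedFrame f u F z) : ip (unitNormal F z) (py f z) = 0 := by
  rw [hF.py_eq, ip_smul_right, unitNormal, ip_conj_conj hF.inv_mul_self, ip_e3_e2, mul_zero]

lemma ip_unitNormal_self (hF : IsAdaptedFrame f u F z) :
    ip (unitNormal F z) (unitNormal F z) = 1 := by
  rw [unitNormal, ip_conj_conj hF.inv_mul_self, ip_e3_e3]

lemma ip_unitNormal_one (hF : IsAdaptedFrame f u F z) : ip (unitNormal F z) 1 = 0 := by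
  rw [ip_one_right, unitNormal, trace_mul_comm, ← mul_assoc, hF.inv_mul_self]
  simp [e3, trace_fin_two]

lemma ip_dz_dz (hF : IsAdaptedFrame f u F z) : ip (dz f z) (dz f z) = 0 := by
  simp only [dz, ip_smul_left, ip_smul_right, ip_sub_left, ip_sub_right, ip_comm (py f z) (px f z),
    hF.ip_px_px, hF.ip_py_py, hF.ip_px_py]
  grind [I_mul_I]

lemma ip_dzb_dzb (hF : IsAdaptedFrame f u F z) : ip (dzb f z) (dzb f z) = 0 := by
  simp only [dzb, ip_smul_left, ip_smul_right, ip_add_left, ip_add_right,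
    ip_comm (py f z) (px f z), hF.ip_px_px, hF.ip_py_py, hF.ip_px_py]
  grind [I_mul_I]

lemma ip_dz_dzb (hF : IsAdaptedFrame f u F z) :
    ip (dz f z) (dzb f z) = ((2 * Real.exp (2 * u z) : ℝ) : ℂ) := by
  simp only [dz, dzb, ip_smul_left, ip_smul_right, ip_sub_left, ip_add_right,
    ip_comm (py f z) (px f z), hF.ip_px_px, hF.ip_py_py, hF.ip_px_py, two_mul (u z), Real.exp_add]
  push_cast
  grind [I_mul_I]

lemma ip_dz_dzb_ne_zero (hF : IsAdaptedFrame f u F z) : ip (dz f z) (dzb f z) ≠ 0 := by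
  rw [hF.ip_dz_dzb, ofReal_ne_zero]
  positivity

lemma ip_unitNormal_dz (hF : IsAdaptedFrame f u F z) : ip (unitNormal F z) (dz f z) = 0 := by
  simp only [dz, ip_smul_right, ip_sub_right, hF.ip_unitNormal_px, hF.ip_unitNormal_py, mul_zero,
    sub_zero]

lemma ip_eq_sum_frame (hF : IsAdaptedFrame f u F z) {X : M2} (hX : ip X 1 = 0) (Y : M2) :
    ip X Y = ip X (F z * e1 * (F z)⁻¹) * ip Y (F z * e1 * (F z)⁻¹)
      + ip X (F z * e2 * (F z)⁻¹) * ip Y (F z * e2 * (F z)⁻¹)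
      + ip X (unitNormal F z) * ip Y (unitNormal F z) := by
  have hinv : F z * (F z)⁻¹ = 1 := mul_eq_one_comm.mp hF.inv_mul_self
  have hX' : ip ((F z)⁻¹ * X * F z) 1 = 0 := by
    rw [← ip_conj_right, mul_one, hinv, hX]
  rw [unitNormal, ← ip_conj_conj hinv X Y, ip_eq_sum_basis, hX', zero_mul, sub_zero]
  simp only [ip_conj_right]

-- Expansion of `⟨X, Y⟩` in the basis `f_z, f_z̄, N`, where `f_z` and `f_z̄` are isotropic.
lemma ip_dz_dzb_mul_ip (hF : IsAdaptedFrame f u F z) {X : M2} (hX : ip X 1 = 0) (Y : M2) :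
    ip (dz f z) (dzb f z) * ip X Y = ip X (dz f z) * ip Y (dzb f z) + ip X (dzb f z) * ip Y (dz f z)
      + ip (dz f z) (dzb f z) * (ip X (unitNormal F z) * ip Y (unitNormal F z)) := by
  rw [hF.ip_eq_sum_frame hX, hF.ip_dz_dzb, two_mul (u z), Real.exp_add]
  simp only [dz, dzb, hF.px_eq, hF.py_eq, ip_smul_right, ip_sub_right, ip_add_right]
  push_cast
  grind [I_mul_I]

lemma ip_px_px_ne_zero (hF : IsAdaptedFrame f u F z) : ip (px f z) (px f z) ≠ 0 := by
  rw [hF.ip_px_px]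
  exact_mod_cast (by positivity : (2 * Real.exp (u z)) ^ 2 ≠ 0)

lemma px_mul_py (hF : IsAdaptedFrame f u F z) :
    px f z * py f z = ip (px f z) (px f z) • unitNormal F z := by
  have hmul : F z * e1 * (F z)⁻¹ * (F z * e2 * (F z)⁻¹) = unitNormal F z := by
    simp only [unitNormal, ← e1_mul_e2, mul_assoc, ← mul_assoc (F z)⁻¹ (F z), hF.inv_mul_self,
      one_mul]
  rw [hF.ip_px_px, sq, hF.px_eq, hF.py_eq, smul_mul_smul_comm, hmul]

lemma unitNormal_eq (hF : IsAdaptedFrame f u F z) :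
    unitNormal F z = (ip (px f z) (px f z))⁻¹ • (px f z * py f z) := by
  rw [hF.px_mul_py, inv_smul_smul₀ hF.ip_px_px_ne_zero]

end IsAdaptedFrame

/-! ### The Hopf differential of a CMC surface is holomorphic -/

/-- The surface `f` with conformal factor `exp u` and frame `F` has mean curvature `H` at `z`:
`(1/8) e^{-2u} ⟨f_xx + f_yy, N⟩ = H`, cleared of denominators. -/
def HasMeanCurvatureAt (f : ℂ → M2) (u : ℂ → ℝ) (F : ℂ → M2) (H : ℝ) (z : ℂ) : Prop :=
  ip (px (px f) z + py (py f) z) (unitNormal F z) = ((8 * Real.exp (2 * u z) * H : ℝ) : ℂ)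

section HopfHolomorphic

variable {f F : ℂ → M2} {u : ℂ → ℝ} {H : ℝ} {z : ℂ}

lemma differentiableAt_unitNormal (hf : ContDiffAt ℝ 2 f z)
    (hF : ∀ᶠ w in nhds z, IsAdaptedFrame f u F w) : DifferentiableAt ℝ (unitNormal F) z := by
  have hx : DifferentiableAt ℝ (px f) z := (contDiffAt_px hf le_rfl).differentiableAt one_ne_zero
  have hy : DifferentiableAt ℝ (py f) z := (contDiffAt_py hf le_rfl).differentiableAt one_ne_zero
  have hnormal : DifferentiableAt ℝ
      (fun w => (ip (px f w) (px f w))⁻¹ • (px f w * py f w)) z :=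
    ((differentiableAt_ip hx hx).inv hF.self_of_nhds.ip_px_px_ne_zero).smul (hx.mul hy)
  exact hnormal.congr_of_eventuallyEq (hF.mono fun _ hw => hw.unitNormal_eq)

lemma ip_dz_unitNormal_unitNormal (hf : ContDiffAt ℝ 2 f z)
    (hF : ∀ᶠ w in nhds z, IsAdaptedFrame f u F w) :
    ip (dz (unitNormal F) z) (unitNormal F z) = 0 :=
  ip_dz_self_eq_zero (differentiableAt_unitNormal hf hF)
    (hF.mono fun _ hw => hw.ip_unitNormal_self)

lemma ip_dzb_unitNormal_unitNormal (hf : ContDiffAt ℝ 2 f z)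
    (hF : ∀ᶠ w in nhds z, IsAdaptedFrame f u F w) :
    ip (dzb (unitNormal F) z) (unitNormal F z) = 0 :=
  ip_dzb_self_eq_zero (differentiableAt_unitNormal hf hF)
    (hF.mono fun _ hw => hw.ip_unitNormal_self)

lemma ip_dz_unitNormal_one (hf : ContDiffAt ℝ 2 f z)
    (hF : ∀ᶠ w in nhds z, IsAdaptedFrame f u F w) : ip (dz (unitNormal F) z) 1 = 0 := by
  have hleib := ip_dz_add_ip_dz_eq_zero (differentiableAt_unitNormal hf hF)
    (differentiableAt_const (1 : M2)) (hF.mono fun _ hw => hw.ip_unitNormal_one)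
  simpa [dz, px, py, ip_zero_right] using hleib

lemma ip_dzb_unitNormal_one (hf : ContDiffAt ℝ 2 f z)
    (hF : ∀ᶠ w in nhds z, IsAdaptedFrame f u F w) : ip (dzb (unitNormal F) z) 1 = 0 := by
  have hleib := ip_dzb_add_ip_dzb_eq_zero (differentiableAt_unitNormal hf hF)
    (differentiableAt_const (1 : M2)) (hF.mono fun _ hw => hw.ip_unitNormal_one)
  simpa [dzb, px, py, ip_zero_right] using hleib

lemma ip_dz_dz_dz (hf : ContDiffAt ℝ 2 f z) (hF : ∀ᶠ w in nhds z, IsAdaptedFrame f u F w) :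
    ip (dz (dz f) z) (dz f z) = 0 :=
  ip_dz_self_eq_zero ((contDiffAt_dz hf le_rfl).differentiableAt one_ne_zero)
    (hF.mono fun _ hw => hw.ip_dz_dz)

lemma ip_dzb_dz_dz (hf : ContDiffAt ℝ 2 f z) (hF : ∀ᶠ w in nhds z, IsAdaptedFrame f u F w) :
    ip (dzb (dz f) z) (dz f z) = 0 :=
  ip_dzb_self_eq_zero ((contDiffAt_dz hf le_rfl).differentiableAt one_ne_zero)
    (hF.mono fun _ hw => hw.ip_dz_dz)

lemma ip_dzb_dz_dzb (hf : ContDiffAt ℝ 2 f z) (hF : ∀ᶠ w in nhds z, IsAdaptedFrame f u F w) :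
    ip (dzb (dz f) z) (dzb f z) = 0 := by
  rw [← dz_dzb hf]
  exact ip_dz_self_eq_zero ((contDiffAt_dzb hf le_rfl).differentiableAt one_ne_zero)
    (hF.mono fun _ hw => hw.ip_dzb_dzb)

lemma dzC_ip_dz_dzb (hf : ContDiffAt ℝ 2 f z) (hF : ∀ᶠ w in nhds z, IsAdaptedFrame f u F w) :
    dzC (fun w => ip (dz f w) (dzb f w)) z = ip (dz (dz f) z) (dzb f z) := by
  rw [dzC_ip ((contDiffAt_dz hf le_rfl).differentiableAt one_ne_zero)
    ((contDiffAt_dzb hf le_rfl).differentiableAt one_ne_zero), dz_dzb hf,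
    ip_comm (dz f z), ip_dzb_dz_dz hf hF, add_zero]

lemma HasMeanCurvatureAt.ip_unitNormal_dzb_dz (hH : HasMeanCurvatureAt f u F H z)
    (hf : ContDiffAt ℝ 2 f z) (hF : IsAdaptedFrame f u F z) :
    ip (unitNormal F z) (dzb (dz f) z) = H * ip (dz f z) (dzb f z) := by
  rw [dzb_dz hf, ip_smul_right, ip_comm, hH, hF.ip_dz_dzb]
  push_cast
  ring

lemma ip_dzb_unitNormal_dz_dz (hf : ContDiffAt ℝ 2 f z)
    (hF : ∀ᶠ w in nhds z, IsAdaptedFrame f u F w) (hH : HasMeanCurvatureAt f u F H z) :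
    ip (dzb (unitNormal F) z) (dz (dz f) z) = -H * ip (dz (dz f) z) (dzb f z) := by
  have hFz := hF.self_of_nhds
  have hweingarten : ip (dzb (unitNormal F) z) (dz f z) = -H * ip (dz f z) (dzb f z) := by
    have hleib := ip_dzb_add_ip_dzb_eq_zero (differentiableAt_unitNormal hf hF)
      ((contDiffAt_dz hf le_rfl).differentiableAt one_ne_zero)
      (hF.mono fun _ hw => hw.ip_unitNormal_dz)
    rw [hH.ip_unitNormal_dzb_dz hf hFz] at hleib
    linear_combination hleib
  refine mul_left_cancel₀ hFz.ip_dz_dzb_ne_zero ?_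
  rw [hFz.ip_dz_dzb_mul_ip (ip_dzb_unitNormal_one hf hF), ip_dz_dz_dz hf hF, hweingarten,
    ip_dzb_unitNormal_unitNormal hf hF]
  ring

lemma ip_dz_unitNormal_dzb_dz (hf : ContDiffAt ℝ 2 f z)
    (hF : ∀ᶠ w in nhds z, IsAdaptedFrame f u F w) :
    ip (dz (unitNormal F) z) (dzb (dz f) z) = 0 := by
  have hFz := hF.self_of_nhds
  refine mul_left_cancel₀ hFz.ip_dz_dzb_ne_zero ?_
  rw [hFz.ip_dz_dzb_mul_ip (ip_dz_unitNormal_one hf hF), ip_dzb_dz_dz hf hF, ip_dzb_dz_dzb hf hF,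
    ip_dz_unitNormal_unitNormal hf hF]
  ring

lemma ip_unitNormal_dzb_dz_dz (hf : ContDiffAt ℝ 3 f z)
    (hF : ∀ᶠ w in nhds z, IsAdaptedFrame f u F w)
    (hH : ∀ᶠ w in nhds z, HasMeanCurvatureAt f u F H w) :
    ip (unitNormal F z) (dzb (dz (dz f)) z) = H * ip (dz (dz f) z) (dzb f z) := by
  have hf2 : ContDiffAt ℝ 2 f z := hf.of_le (by norm_num)
  have hdz : ContDiffAt ℝ 2 (dz f) z := contDiffAt_dz hf (by norm_num)
  have hdzb : DifferentiableAt ℝ (dzb f) z :=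
    (contDiffAt_dzb hf2 le_rfl).differentiableAt one_ne_zero
  have hcmc : (fun w => ip (unitNormal F w) (dzb (dz f) w)) =ᶠ[nhds z]
      fun w => H * ip (dz f w) (dzb f w) := by
    filter_upwards [hF, hH, hf2.eventually (by simp)] with w hFw hHw hfw
    exact hHw.ip_unitNormal_dzb_dz hfw hFw
  have hleib := dzC_ip (differentiableAt_unitNormal hf2 hF)
    ((contDiffAt_dzb hdz le_rfl).differentiableAt one_ne_zero)
  rw [ip_dz_unitNormal_dzb_dz hf2 hF, zero_add, dz_dzb hdz, dzC_congr hcmc,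
    dzC_const_mul (differentiableAt_ip (hdz.differentiableAt two_ne_zero) hdzb),
    dzC_ip_dz_dzb hf2 hF] at hleib
  exact hleib.symm

theorem differentiableAt_hopfCoeff (hf : ContDiffAt ℝ 3 f z)
    (hF : ∀ᶠ w in nhds z, IsAdaptedFrame f u F w)
    (hH : ∀ᶠ w in nhds z, HasMeanCurvatureAt f u F H w) :
    DifferentiableAt ℂ (hopfCoeff f F) z := by
  have hf2 : ContDiffAt ℝ 2 f z := hf.of_le (by norm_num)
  have hN := differentiableAt_unitNormal hf2 hF
  have hdzdz : DifferentiableAt ℝ (dz (dz f)) z :=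
    (contDiffAt_dz (contDiffAt_dz hf (m := 2) (by norm_num)) le_rfl).differentiableAt one_ne_zero
  refine differentiableAt_complex_of_dzbC_eq_zero (differentiableAt_ip hN hdzdz) ?_
  calc dzbC (hopfCoeff f F) z
      = ip (dzb (unitNormal F) z) (dz (dz f) z) + ip (unitNormal F z) (dzb (dz (dz f)) z) :=
        dzbC_ip hN hdzdz
    _ = -H * ip (dz (dz f) z) (dzb f z) + H * ip (dz (dz f) z) (dzb f z) := by
        rw [ip_dzb_unitNormal_dz_dz hf2 hF hH.self_of_nhds, ip_unitNormal_dzb_dz_dz hf hF hH]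
    _ = 0 := by ring

theorem differentiableOn_hopfCoeff {S : Set ℂ} (hS : IsOpen S) (hf : ContDiffOn ℝ 3 f S)
    (hF : ∀ z ∈ S, IsAdaptedFrame f u F z) (hH : ∀ z ∈ S, HasMeanCurvatureAt f u F H z) :
    DifferentiableOn ℂ (hopfCoeff f F) S := fun _ hz =>
  (differentiableAt_hopfCoeff (hf.contDiffAt (hS.mem_nhds hz))
    (Filter.eventually_of_mem (hS.mem_nhds hz) hF)
    (Filter.eventually_of_mem (hS.mem_nhds hz) hH)).differentiableWithinAt

end HopfHolomorphic

/-! ### Angles of curves in the unit circle -/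

/-- The angular velocity of a curve `c` in the unit circle, `Im (c̄ c′)`, so that
`c′ = i · angularVelocity c · c`. -/
def angularVelocity (c : ℝ → ℂ) (x : ℝ) : ℝ := (starRingEnd ℂ (c x) * deriv c x).im

section RealCurves

variable {J : Set ℝ} {x x₀ : ℝ}

lemma hasDerivAt_of_norm_eq_one {c : ℝ → ℂ} (hc : DifferentiableAt ℝ c x)
    (hnorm : ∀ᶠ t in nhds x, ‖c t‖ = 1) : HasDerivAt c (I * angularVelocity c x * c x) x := by
  have hperp : inner ℝ (c x) (deriv c x) = 0 := by
    have hconst : HasDerivAt (fun t => ‖c t‖ ^ 2) 0 x :=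
      (hasDerivAt_const x (1 : ℝ)).congr_of_eventuallyEq
        (hnorm.mono fun t ht => by simp only [ht, one_pow])
    linarith [hc.hasDerivAt.norm_sq.unique hconst]
  have himag : starRingEnd ℂ (c x) * deriv c x = I * angularVelocity c x := by
    rw [Complex.inner, mul_comm] at hperp
    rw [← re_add_im (starRingEnd ℂ (c x) * deriv c x), hperp, ofReal_zero, zero_add, mul_comm,
      angularVelocity]
  have hunit : c x * starRingEnd ℂ (c x) = 1 := by
    rw [mul_conj', hnorm.self_of_nhds, ofReal_one, one_pow]
  refine hc.hasDerivAt.congr_deriv ?_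
  rw [← himag]
  linear_combination -deriv c x * hunit

lemma eqOn_exp_ofReal_mul_I (hJo : IsOpen J) (hJc : IsPreconnected J) (hx₀ : x₀ ∈ J)
    {c : ℝ → ℂ} {θ θ' : ℝ → ℝ} (hθ : ∀ x ∈ J, HasDerivAt θ (θ' x) x)
    (hc : ∀ x ∈ J, HasDerivAt c (I * θ' x * c x) x) (hc₀ : c x₀ = exp (θ x₀ * I)) :
    Set.EqOn c (fun x => exp (θ x * I)) J := by
  have hderiv : ∀ x ∈ J, HasDerivAt (fun t => c t * exp (-(θ t * I))) 0 x := fun x hx => by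
    have hexp := (((hθ x hx).ofReal_comp.mul_const I).neg).cexp
    refine ((hc x hx).mul hexp).congr_deriv ?_
    ring
  intro x hx
  have hconst : c x * exp (-(θ x * I)) = c x₀ * exp (-(θ x₀ * I)) :=
    hJo.is_const_of_deriv_eq_zero hJc
      (fun t ht => (hderiv t ht).differentiableAt.differentiableWithinAt)
      (fun t ht => (hderiv t ht).deriv) hx hx₀
  rwa [hc₀, exp_neg, exp_neg, mul_inv_cancel₀ (exp_ne_zero _), ← div_eq_mul_inv,
    div_eq_one_iff_eq (exp_ne_zero _)] at hconst

lemma exists_primitive_of_continuousAt {E : Type*} [NormedAddCommGroup E] [NormedSpace ℝ E]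
    [CompleteSpace E] (hJo : IsOpen J) (hJc : J.OrdConnected) (hx₀ : x₀ ∈ J) {φ : ℝ → E}
    (hφ : ∀ x ∈ J, ContinuousAt φ x) :
    ∃ Φ : ℝ → E, Φ x₀ = 0 ∧ ∀ x ∈ J, HasDerivAt Φ (φ x) x := by
  have hφJ : ContinuousOn φ J := fun x hx => (hφ x hx).continuousWithinAt
  refine ⟨fun x => ∫ t in x₀..x, φ t, intervalIntegral.integral_same, fun x hx => ?_⟩
  exact intervalIntegral.integral_hasDerivAt_right
    (hφJ.mono (hJc.uIcc_subset hx₀ hx)).intervalIntegrable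
    (hφJ.stronglyMeasurableAtFilter hJo x hx) (hφ x hx)

-- A real primitive differs locally by a constant from the restriction of a holomorphic one.
lemma analyticAt_of_hasDerivAt_comp_ofReal {Φ : ℝ → ℂ} {q : ℂ → ℂ}
    (hq : ∀ᶠ z in nhds (x : ℂ), DifferentiableAt ℂ q z)
    (hΦ : ∀ᶠ t : ℝ in nhds x, HasDerivAt Φ (q t) t) : AnalyticAt ℝ Φ x := by
  obtain ⟨r, hr, hqr⟩ := Metric.eventually_nhds_iff_ball.mp hq
  obtain ⟨s, hs, hΦs⟩ := Metric.eventually_nhds_iff_ball.mp hΦ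
  obtain ⟨g, hg⟩ := DifferentiableOn.isExactOn_ball (f := q) (c := (x : ℂ)) (r := r)
    fun z hz => (hqr z hz).differentiableWithinAt
  have hg_analytic : AnalyticAt ℂ g x :=
    DifferentiableOn.analyticAt (fun z hz => (hg z hz).differentiableAt.differentiableWithinAt)
      (Metric.ball_mem_nhds _ hr)
  have hg_real : AnalyticAt ℝ (fun t : ℝ => g t) x :=
    hg_analytic.restrictScalars.comp (ofRealCLM.analyticAt x)
  have hdiff : ∀ t ∈ Metric.ball x (min r s), HasDerivAt (fun t : ℝ => Φ t - g t) 0 t := by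
    intro t ht
    have htr : (t : ℂ) ∈ Metric.ball (x : ℂ) r := by
      rw [Metric.mem_ball, isometry_ofReal.dist_eq]
      exact Metric.ball_subset_ball (min_le_left r s) ht
    have hts : t ∈ Metric.ball x s := Metric.ball_subset_ball (min_le_right r s) ht
    exact ((hΦs t hts).sub (hg _ htr).comp_ofReal).congr_deriv (sub_self _)
  obtain ⟨k, hk⟩ := Metric.isOpen_ball.exists_is_const_of_deriv_eq_zero
    (convex_ball x (min r s)).isPreconnected
    (fun t ht => (hdiff t ht).differentiableAt.differentiableWithinAt)
    (fun t ht => (hdiff t ht).deriv)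
  refine (analyticAt_const.add hg_real : AnalyticAt ℝ (fun t : ℝ => k + g t) x).congr ?_
  filter_upwards [Metric.ball_mem_nhds x (lt_min hr hs)] with t ht
  exact (sub_eq_iff_eq_add.mp (hk t ht)).symm

lemma exists_analyticOnNhd_primitive_comp_ofReal (hJo : IsOpen J) (hJc : J.OrdConnected)
    (hx₀ : x₀ ∈ J) {S : Set ℂ} (hS : IsOpen S) (hJS : ∀ x ∈ J, (x : ℂ) ∈ S) {q : ℂ → ℂ}
    (hq : DifferentiableOn ℂ q S) :
    ∃ Φ : ℝ → ℂ, AnalyticOnNhd ℝ Φ J ∧ Φ x₀ = 0 ∧ ∀ x ∈ J, HasDerivAt Φ (q x) x := by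
  have hq_at : ∀ z ∈ S, DifferentiableAt ℂ q z := fun z hz => hq.differentiableAt (hS.mem_nhds hz)
  obtain ⟨Φ, hΦ₀, hΦ⟩ := exists_primitive_of_continuousAt hJo hJc hx₀ (φ := fun t : ℝ => q t)
    fun x hx => (hq_at x (hJS x hx)).continuousAt.comp (f := ofReal) continuous_ofReal.continuousAt
  refine ⟨Φ, fun x hx => ?_, hΦ₀, hΦ⟩
  exact analyticAt_of_hasDerivAt_comp_ofReal
    (Filter.eventually_of_mem (hS.mem_nhds (hJS x hx)) hq_at)
    (Filter.eventually_of_mem (hJo.mem_nhds hx) hΦ)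

lemma exists_analyticOnNhd_angle (hJo : IsOpen J) (hJc : J.OrdConnected) (hx₀ : x₀ ∈ J)
    {S : Set ℂ} (hS : IsOpen S) (hJS : ∀ x ∈ J, (x : ℂ) ∈ S) {q : ℂ → ℂ}
    (hq : DifferentiableOn ℂ q S) {c : ℝ → ℂ} (hc : ∀ x ∈ J, DifferentiableAt ℝ c x)
    (hnorm : ∀ x ∈ J, ‖c x‖ = 1) (hc₀ : c x₀ = 1)
    (hcq : ∀ x ∈ J, angularVelocity c x = (q x).im) :
    ∃ θ : ℝ → ℝ, AnalyticOnNhd ℝ θ J ∧ θ x₀ = 0 ∧ (∀ x ∈ J, c x = exp (θ x * I)) ∧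
      ∀ x ∈ J, deriv θ x = angularVelocity c x := by
  obtain ⟨Φ, hΦ_analytic, hΦ₀, hΦ⟩ :=
    exists_analyticOnNhd_primitive_comp_ofReal hJo hJc hx₀ hS hJS hq
  have hθ : ∀ x ∈ J, HasDerivAt (fun t => (Φ t).im) (angularVelocity c x) x := fun x hx => by
    rw [hcq x hx]
    exact imCLM.hasFDerivAt.comp_hasDerivAt x (hΦ x hx)
  have hθ₀ : (Φ x₀).im = 0 := by rw [hΦ₀, zero_im]
  have hrot : ∀ x ∈ J, HasDerivAt c (I * angularVelocity c x * c x) x := fun x hx =>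
    hasDerivAt_of_norm_eq_one (hc x hx) (Filter.eventually_of_mem (hJo.mem_nhds hx) hnorm)
  refine ⟨fun t => (Φ t).im, fun x hx => (imCLM.analyticAt _).comp (hΦ_analytic x hx), hθ₀,
    eqOn_exp_ofReal_mul_I hJo hJc.isPreconnected hx₀ hθ hrot ?_, fun x hx => (hθ x hx).deriv⟩
  rw [hc₀, hθ₀, ofReal_zero, zero_mul, exp_zero]

end RealCurves

/-! ### Surfaces containing a line segment -/

/-- The plane orthogonal to the line `ℝ e₁`, parametrized by `a + ib ↦ a e₂ + b e₃`. -/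
def normalPlane : ℂ →L[ℝ] M2 := reCLM.smulRight e2 + imCLM.smulRight e3

/-- The complex coordinate `⟨X, e₂⟩ + i ⟨X, e₃⟩` of the component of `X` orthogonal to `ℝ e₁`. -/
def normalCoord : M2 →L[ℝ] ℂ := ipL.flip e2 + I • ipL.flip e3

lemma normalPlane_apply (w : ℂ) : normalPlane w = (w.re : ℂ) • e2 + (w.im : ℂ) • e3 := by
  simp only [coe_smul]
  rfl

lemma normalCoord_apply (X : M2) : normalCoord X = ip X e2 + I * ip X e3 := rfl

lemma e1_mul_normalPlane (w : ℂ) : e1 * normalPlane w = normalPlane (I * w) := by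
  simp only [normalPlane_apply, mul_add, mul_smul_comm, e1_mul_e2, e1_mul_e3, I_mul_re, I_mul_im]
  push_cast
  module

lemma ip_normalPlane_normalPlane (v w : ℂ) :
    ip (normalPlane v) (normalPlane w) = ((starRingEnd ℂ v * w).re : ℂ) := by
  simp only [normalPlane_apply, ip_add_left, ip_add_right, ip_smul_left, ip_smul_right, ip_e2_e2,
    ip_e3_e3, ip_e3_e2, ip_comm e2 e3, mul_re, conj_re, conj_im]
  push_cast
  ring

lemma normalPlane_normalCoord {X : M2} (hX : Xᴴ = -X) (hX_one : ip X 1 = 0) (hX_e1 : ip X e1 = 0) :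
    normalPlane (normalCoord X) = X := by
  have hcoord : normalCoord X = ((ip X e2).re : ℂ) + ((ip X e3).re : ℂ) * I := by
    rw [normalCoord_apply, ofReal_re_ip_of_skew hX conjTranspose_e2,
      ofReal_re_ip_of_skew hX conjTranspose_e3, mul_comm]
  have hsum := sum_ip_smul_basis X
  rw [hX_one, hX_e1, zero_smul, zero_smul, sub_zero, zero_add] at hsum
  rw [normalPlane_apply, hcoord, ← mk_eq_add_mul_I, ofReal_re_ip_of_skew hX conjTranspose_e2,
    ofReal_re_ip_of_skew hX conjTranspose_e3, hsum]

lemma normalPlane_exp_ofReal_mul_I (θ : ℝ) :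
    normalPlane (exp (θ * I)) = ((Real.cos θ : ℝ) : ℂ) • e2 + ((Real.sin θ : ℝ) : ℂ) • e3 := by
  rw [normalPlane_apply, exp_ofReal_mul_I_re, exp_ofReal_mul_I_im]

section AlongRealLine

variable {g : ℂ → M2} {x : ℝ}

lemma hasDerivAt_px_comp_ofReal (hg : DifferentiableAt ℝ g x) :
    HasDerivAt (fun t : ℝ => g t) (px g x) x :=
  hg.hasFDerivAt.comp_hasDerivAt x ofRealCLM.hasDerivAt

lemma px_ofReal_eq_of_hasDerivAt {h : ℝ → M2} {h' : M2} (hg : DifferentiableAt ℝ g x)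
    (hh : HasDerivAt h h' x) (hgh : ∀ᶠ t : ℝ in nhds x, g t = h t) : px g x = h' :=
  ((hasDerivAt_px_comp_ofReal hg).congr_of_eventuallyEq (hgh.mono fun _ ht => ht.symm)).unique hh

end AlongRealLine

/-- For a surface with `f_x = 2 e₁` at `z`, the unit conormal `f_y / 2` as a complex number under
`normalPlane`. -/
def conormal (f : ℂ → M2) (z : ℂ) : ℂ := (2 : ℂ)⁻¹ * normalCoord (py f z)

namespace IsAdaptedFrame

variable {f F : ℂ → M2} {u : ℂ → ℝ} {z : ℂ}

lemma conjTranspose_py (hF : IsAdaptedFrame f u F z) : (py f z)ᴴ = -py f z := by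
  rw [hF.py_eq, hF.inv_eq_conjTranspose]
  simp only [conjTranspose_smul, conjTranspose_mul, conjTranspose_conjTranspose, conjTranspose_e2,
    star_def, conj_ofReal, mul_neg, neg_mul, smul_neg, mul_assoc]

lemma ip_py_one (hF : IsAdaptedFrame f u F z) : ip (py f z) 1 = 0 := by
  rw [ip_one_right, hF.py_eq, trace_smul, trace_mul_comm, ← mul_assoc, hF.inv_mul_self]
  simp [e2, trace_fin_two]

lemma u_eq_zero_of_px_eq (hF : IsAdaptedFrame f u F z) (hx : px f z = (2 : ℂ) • e1) : u z = 0 := by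
  have hsq := hF.ip_px_px
  rw [hx, ip_smul_left, ip_smul_right, ip_e1_e1] at hsq
  have hsq_real : (2 * Real.exp (u z)) ^ 2 = 2 ^ 2 := by
    rw [← ofReal_inj, ofReal_pow, ← hsq]
    norm_num
  have hexp : 2 * Real.exp (u z) = 2 := (sq_eq_sq₀ (by positivity) zero_le_two).mp hsq_real
  exact (Real.exp_eq_one_iff _).mp (by linarith)

lemma py_eq_normalPlane_conormal (hF : IsAdaptedFrame f u F z) (hx : px f z = (2 : ℂ) • e1) :
    py f z = (2 : ℂ) • normalPlane (conormal f z) := by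
  have hperp : ip (py f z) e1 = 0 := by
    have hxy := hF.ip_px_py
    rw [hx, ip_smul_left, ip_comm] at hxy
    exact (mul_eq_zero.mp hxy).resolve_left two_ne_zero
  have hcoord : normalCoord (py f z) = (2 : ℝ) • conormal f z := by
    rw [conormal, real_smul, ofReal_ofNat, mul_inv_cancel_left₀ two_ne_zero]
  rw [← ofReal_ofNat, coe_smul, ← map_smul, ← hcoord,
    normalPlane_normalCoord hF.conjTranspose_py hF.ip_py_one hperp]

lemma norm_conormal (hF : IsAdaptedFrame f u F z) (hx : px f z = (2 : ℂ) • e1) :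
    ‖conormal f z‖ = 1 := by
  have hsq := hF.ip_py_py
  rw [hF.u_eq_zero_of_px_eq hx, hF.py_eq_normalPlane_conormal hx, ip_smul_left, ip_smul_right,
    ip_normalPlane_normalPlane, conj_mul', ← ofReal_pow, ofReal_re] at hsq
  have hsq_real : ‖conormal f z‖ ^ 2 = 1 := by
    rw [← ofReal_inj, ofReal_one]
    simp only [Real.exp_zero, mul_one, ofReal_ofNat] at hsq
    linear_combination (4 : ℂ)⁻¹ * hsq
  exact (pow_eq_one_iff_of_nonneg (norm_nonneg _) two_ne_zero).mp hsq_real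

lemma unitNormal_eq_normalPlane (hF : IsAdaptedFrame f u F z) (hx : px f z = (2 : ℂ) • e1) :
    unitNormal F z = normalPlane (I * conormal f z) := by
  rw [hF.unitNormal_eq, hF.py_eq_normalPlane_conormal hx, hx, ip_smul_left, ip_smul_right, ip_e1_e1,
    smul_mul_smul_comm, e1_mul_normalPlane, mul_one, inv_smul_smul₀ (by norm_num)]

lemma conormal_eq_one (hF : IsAdaptedFrame f u F z) (hx : px f z = (2 : ℂ) • e1)
    {c : ℝ} (hc : 0 < c) (hy : py f z = (c : ℂ) • e2) : conormal f z = 1 := by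
  have hval : conormal f z = ((c / 2 : ℝ) : ℂ) := by
    rw [conormal, normalCoord_apply, hy, ip_smul_left, ip_smul_left, ip_e2_e2, ip_comm e2, ip_e3_e2]
    push_cast
    ring
  have hnorm := hF.norm_conormal hx
  rw [hval, norm_real, Real.norm_of_nonneg (by positivity)] at hnorm
  rw [hval, hnorm, ofReal_one]

end IsAdaptedFrame

section SurfaceThroughLine

variable {f F : ℂ → M2} {u : ℂ → ℝ} {H x : ℝ}

lemma differentiableAt_conormal (hf : ContDiffAt ℝ 2 f x) :
    DifferentiableAt ℝ (fun t : ℝ => conormal f t) x := by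
  have hy : DifferentiableAt ℝ (py f) x := (contDiffAt_py hf le_rfl).differentiableAt one_ne_zero
  exact (normalCoord.differentiableAt.comp x
    (hasDerivAt_px_comp_ofReal hy).differentiableAt).const_mul (2 : ℂ)⁻¹

lemma px_eq_of_line (hf : DifferentiableAt ℝ f x)
    (hline : ∀ᶠ t : ℝ in nhds x, f t = ((2 * t : ℝ) : ℂ) • e1) : px f x = (2 : ℂ) • e1 := by
  refine px_ofReal_eq_of_hasDerivAt hf
    ((((hasDerivAt_id' x).const_mul 2).ofReal_comp.smul_const e1).congr_deriv ?_) hline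
  rw [mul_one, ofReal_ofNat]

lemma px_px_eq_zero_of_line {v : M2} (hf : ContDiffAt ℝ 2 f x)
    (hx : ∀ᶠ t : ℝ in nhds x, px f t = v) : px (px f) x = 0 :=
  px_ofReal_eq_of_hasDerivAt ((contDiffAt_px hf le_rfl).differentiableAt one_ne_zero)
    (hasDerivAt_const x _) hx

lemma px_py_eq_of_line (hf : ContDiffAt ℝ 2 f x)
    (hF : ∀ᶠ t : ℝ in nhds x, IsAdaptedFrame f u F t)
    (hx : ∀ᶠ t : ℝ in nhds x, px f t = (2 : ℂ) • e1) :
    px (py f) x = (2 : ℂ) • normalPlane (deriv (fun t : ℝ => conormal f t) x) :=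
  px_ofReal_eq_of_hasDerivAt ((contDiffAt_py hf le_rfl).differentiableAt one_ne_zero)
    ((normalPlane.hasFDerivAt.comp_hasDerivAt x
      (differentiableAt_conormal hf).hasDerivAt).const_smul (2 : ℂ))
    ((hF.and hx).mono fun _ ht => ht.1.py_eq_normalPlane_conormal ht.2)

lemma hopfCoeff_eq_of_line (hf : ContDiffAt ℝ 2 f x)
    (hF : ∀ᶠ t : ℝ in nhds x, IsAdaptedFrame f u F t)
    (hx : ∀ᶠ t : ℝ in nhds x, px f t = (2 : ℂ) • e1) (hH : HasMeanCurvatureAt f u F H x) :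
    hopfCoeff f F x = -I * angularVelocity (fun t : ℝ => conormal f t) x - 2 * H := by
  have hFx := hF.self_of_nhds
  have hxx : px (px f) x = 0 := px_px_eq_zero_of_line hf hx
  have hyy : ip (unitNormal F x) (py (py f) x) = 8 * H := by
    rw [HasMeanCurvatureAt, hxx, zero_add, hFx.u_eq_zero_of_px_eq hx.self_of_nhds, ip_comm] at hH
    simpa using hH
  have hxy : ip (unitNormal F x) (px (py f) x) =
      2 * angularVelocity (fun t : ℝ => conormal f t) x := by
    rw [px_py_eq_of_line hf hF hx, hFx.unitNormal_eq_normalPlane hx.self_of_nhds, ip_smul_right,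
      ip_normalPlane_normalPlane, angularVelocity]
    simp [sub_eq_add_neg]
  rw [hopfCoeff, dz_dz hf, hxx, ip_smul_right, ip_sub_right, ip_sub_right, ip_smul_right,
    ip_zero_right, hyy, hxy]
  ring

end SurfaceThroughLine

theorem cmc_containing_line_converse_general
    {J : Set ℝ} (hJo : IsOpen J) (hJc : J.OrdConnected) {x₀ : ℝ} (hx₀ : x₀ ∈ J) {H : ℝ}
    {S : Set ℂ} (hS : IsOpen S) (hJS : ∀ x ∈ J, (x : ℂ) ∈ S)
    {f F : ℂ → M2} {u : ℂ → ℝ} (hf : ContDiffOn ℝ 3 f S)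
    (hF : ∀ z ∈ S, IsAdaptedFrame f u F z) (hH : ∀ z ∈ S, HasMeanCurvatureAt f u F H z)
    (hline : ∀ x ∈ J, f (x : ℂ) = ((2 * x : ℝ) : ℂ) • e1)
    (hx₀tan : ∃ c : ℝ, 0 < c ∧ py f (x₀ : ℂ) = (c : ℂ) • e2) :
    (∀ x ∈ J, u (x : ℂ) = 0) ∧
    ∃ θ : ℝ → ℝ, AnalyticOnNhd ℝ θ J ∧ θ x₀ = 0 ∧
      (∀ x ∈ J, py f (x : ℂ) =
        (2 : ℂ) • (((Real.cos (θ x) : ℝ) : ℂ) • e2 + ((Real.sin (θ x) : ℝ) : ℂ) • e3)) ∧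
      (∀ x ∈ J, hopfCoeff f F x = -I * ((deriv θ x : ℝ) : ℂ) - 2 * (H : ℂ)) := by
  have hf2 : ∀ x ∈ J, ContDiffAt ℝ 2 f x := fun x hx =>
    (hf.contDiffAt (hS.mem_nhds (hJS x hx))).of_le (by norm_num)
  have hFJ : ∀ x ∈ J, IsAdaptedFrame f u F x := fun x hx => hF x (hJS x hx)
  have hpx : ∀ x ∈ J, px f x = (2 : ℂ) • e1 := fun x hx =>
    px_eq_of_line ((hf2 x hx).differentiableAt two_ne_zero)
      (Filter.eventually_of_mem (hJo.mem_nhds hx) hline)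
  have hQ : ∀ x ∈ J,
      hopfCoeff f F x = -I * angularVelocity (fun t : ℝ => conormal f t) x - 2 * H := fun x hx =>
    hopfCoeff_eq_of_line (hf2 x hx) (Filter.eventually_of_mem (hJo.mem_nhds hx) hFJ)
      (Filter.eventually_of_mem (hJo.mem_nhds hx) hpx) (hH x (hJS x hx))
  obtain ⟨c₀, hc₀, hy₀⟩ := hx₀tan
  obtain ⟨θ, hθ_analytic, hθ₀, hθ, hθ'⟩ := exists_analyticOnNhd_angle hJo hJc hx₀ hS hJS
    (differentiableOn_hopfCoeff hS hf hF hH).neg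
    (fun x hx => differentiableAt_conormal (hf2 x hx))
    (fun x hx => (hFJ x hx).norm_conormal (hpx x hx))
    ((hFJ x₀ hx₀).conormal_eq_one (hpx x₀ hx₀) hc₀ hy₀) (fun x hx => by simp [hQ x hx])
  refine ⟨fun x hx => (hFJ x hx).u_eq_zero_of_px_eq (hpx x hx), θ, hθ_analytic, hθ₀, ?_, ?_⟩
  · intro x hx
    rw [(hFJ x hx).py_eq_normalPlane_conormal (hpx x hx), hθ x hx, normalPlane_exp_ofReal_mul_I]
  · intro x hx
    rw [hθ' x hx, hQ x hx]

/-- CMC surfaces containing a line segment (converse): if a conformal CMC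
`H ≠ 0` immersion contains the segment `x ↦ (2x,0,0)` over `J × {0}` with
`∂_y f(x₀,0)` a positive multiple of `e₂`, then `u = 0` along the segment and there is a
real analytic angle function `θ₀` with `θ₀(x₀) = 0` describing the normal, with
`∂_y f(x,0) = 2(cos θ₀ e₂ + sin θ₀ e₃)` and `Q(x,0) = -i θ₀′(x) - 2H`. -/
theorem cmc_containing_line_converse
    (J : Set ℝ) (hJo : IsOpen J) (hJc : J.OrdConnected)
    (x₀ : ℝ) (hx₀ : x₀ ∈ J)
    (H : ℝ) (hH : H ≠ 0)
    (S : Set ℂ) (hS : IsOpen S) (hJS : ∀ x ∈ J, (x : ℂ) ∈ S)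
    (f : ℂ → M2) (u : ℂ → ℝ) (F : ℂ → M2)
    (hf : ContDiffOn ℝ (⊤ : ℕ∞) f S)
    (hu : ContDiffOn ℝ (⊤ : ℕ∞) u S)
    (hF : ContDiffOn ℝ (⊤ : ℕ∞) F S)
    (hsu2 : ∀ z ∈ S, (f z)ᴴ = -(f z) ∧ (f z).trace = 0)
    (hconf : ∀ z ∈ S,
      ip (px f z) (px f z) = ((4 * Real.exp (2 * u z) : ℝ) : ℂ) ∧
      ip (py f z) (py f z) = ((4 * Real.exp (2 * u z) : ℝ) : ℂ) ∧
      ip (px f z) (py f z) = 0)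
    (hFunit : ∀ z ∈ S, (F z)ᴴ * F z = 1 ∧ (F z).det = 1)
    (hFe1 : ∀ z ∈ S, F z * e1 * (F z)⁻¹ = (((2 * Real.exp (u z))⁻¹ : ℝ) : ℂ) • px f z)
    (hFe2 : ∀ z ∈ S, F z * e2 * (F z)⁻¹ = (((2 * Real.exp (u z))⁻¹ : ℝ) : ℂ) • py f z)
    (hcmc : ∀ z ∈ S, ip (px (px f) z + py (py f) z) (F z * e3 * (F z)⁻¹)
      = ((8 * Real.exp (2 * u z) * H : ℝ) : ℂ))
    (hline : ∀ x ∈ J, f (x : ℂ) = ((2 * x : ℝ) : ℂ) • e1)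
    (hx₀tan : ∃ c : ℝ, 0 < c ∧ py f (x₀ : ℂ) = (c : ℂ) • e2) :
    (∀ x ∈ J, u (x : ℂ) = 0) ∧
    ∃ θ₀ : ℝ → ℝ, AnalyticOnNhd ℝ θ₀ J ∧ θ₀ x₀ = 0 ∧
      (∀ x ∈ J, py f (x : ℂ) =
        (2 : ℂ) • (((Real.cos (θ₀ x) : ℝ) : ℂ) • e2 + ((Real.sin (θ₀ x) : ℝ) : ℂ) • e3)) ∧
      (∀ x ∈ J, ip (F (x : ℂ) * e3 * (F (x : ℂ))⁻¹) (dz (dz f) (x : ℂ))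
        = -Complex.I * ((deriv θ₀ x : ℝ) : ℂ) - 2 * (H : ℂ)) := by
  exact cmc_containing_line_converse_general hJo hJc hx₀ hS hJS (hf.of_le (by norm_cast))
    (fun z hz => ⟨(hFunit z hz).1, hFe1 z hz, hFe2 z hz⟩) hcmc hline hx₀tan
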